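/- arXiv:1709.02669 — 3 statements merged into one kernel-verified Lean document; each statement's English description precedes it below -/
import Mathlib

section
/- Let w, h : ℝ → ℝ be continuous, suppose there is T ≥ 0 with w(t) < 0 for all t ≥ T, suppose exp(−∫₀ᵗ w(s) ds) → ∞ as t → ∞, and suppose h(t)/w(t) → 0 as t → ∞. Then E(t) = exp(∫₀ᵗ w(s) ds) · ∫₀ᵗ h(τ)·exp(−∫₀^τ w(s) ds) dτ tends to 0 as t → ∞. -/
open Filter

/-- L'Hospital-type asymptotics: if `w t < 0` for large `t`, `exp (−∫₀ᵗ w) → ∞` and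
`h t / w t → 0` as `t → ∞`, then
`E t = exp (∫₀ᵗ w) · ∫₀ᵗ h τ · exp (−∫₀^τ w) dτ → 0` as `t → ∞`. -/
theorem solution_tends_to_zero (w h : ℝ → ℝ) (hw : Continuous w) (hh : Continuous h)
    (T : ℝ) (hT : 0 ≤ T) (hwneg : ∀ t : ℝ, T ≤ t → w t < 0)
    (hexp : Tendsto (fun t : ℝ => Real.exp (-∫ s in (0 : ℝ)..t, w s)) atTop atTop)
    (hquot : Tendsto (fun t : ℝ => h t / w t) atTop (nhds 0))
    (E : ℝ → ℝ)
    (hE : ∀ t : ℝ, E t = Real.exp (∫ s in (0 : ℝ)..t, w s) *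
      ∫ τ in (0 : ℝ)..t, h τ * Real.exp (-∫ s in (0 : ℝ)..τ, w s)) :
    Tendsto E atTop (nhds 0) := by
  set G : ℝ → ℝ := fun t => Real.exp (-∫ s in (0 : ℝ)..t, w s) with hG
  set F : ℝ → ℝ := fun t => ∫ τ in (0 : ℝ)..t, h τ * G τ with hF
  have hGd : ∀ t, HasDerivAt G (G t * (-w t)) t := fun t =>
    ((hw.integral_hasStrictDerivAt 0 t).hasDerivAt.neg).exp
  have hGc : Continuous G := continuous_iff_continuousAt.2 fun t => (hGd t).continuousAt
  have hFd : ∀ t, HasDerivAt F (h t * G t) t := fun t =>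
    ((hh.mul hGc).integral_hasStrictDerivAt 0 t).hasDerivAt
  have hGpos : ∀ t, 0 < G t := fun t => Real.exp_pos _
  have hEG : ∀ t, E t * G t = F t := by
    intro t
    rw [hE t, mul_right_comm, hG]
    simp only
    rw [← Real.exp_add]
    simp [hF, hG]
  rw [Metric.tendsto_atTop']
  intro ε hε
  obtain ⟨c, hc⟩ : ∃ c, c = ε / 2 := ⟨_, rfl⟩
  have hc0 : 0 < c := by linarith
  obtain ⟨S0, hS0⟩ := Metric.tendsto_atTop.1 hquot c hc0
  obtain ⟨S, hS⟩ : ∃ S, S = max S0 T := ⟨_, rfl⟩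
  have hb : ∀ t, S ≤ t → |h t| ≤ c * (-w t) := by
    intro t ht
    have h1 := hS0 t (le_trans (hS ▸ le_max_left _ _) ht)
    have h2 := hwneg t (le_trans (hS ▸ le_max_right _ _) ht)
    rw [Real.dist_eq, sub_zero, abs_div, abs_of_neg h2, div_lt_iff₀ (by linarith)] at h1
    exact h1.le
  have key : ∀ σ : ℝ, |σ| = 1 → MonotoneOn (fun t => c * G t + σ * F t) (Set.Ici S) := by
    intro σ hσ
    have hd : ∀ t, HasDerivAt (fun t => c * G t + σ * F t)
        (c * (G t * (-w t)) + σ * (h t * G t)) t := fun t =>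
      ((hGd t).const_mul c).add ((hFd t).const_mul σ)
    apply monotoneOn_of_deriv_nonneg (convex_Ici S)
    · exact fun t _ => (hd t).continuousAt.continuousWithinAt
    · exact fun t _ => (hd t).differentiableAt.differentiableWithinAt
    · intro t ht
      rw [interior_Ici] at ht
      rw [(hd t).deriv]
      have h1 := hb t (le_of_lt ht)
      have h2 : -(σ * h t) ≤ |h t| := by
        have := neg_le_abs (σ * h t)
        rwa [abs_mul, hσ, one_mul] at this
      have h3 : 0 ≤ G t * (c * (-w t) + σ * h t) :=
        mul_nonneg (hGpos t).le (by linarith)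
      linarith
  obtain ⟨N, hN⟩ := Filter.eventually_atTop.1 (hexp.eventually_gt_atTop (|F S| / c))
  refine ⟨max N S, fun t ht => ?_⟩
  have htS : S ≤ t := (le_max_right _ _).trans ht.le
  have htN : |F S| / c < G t := hN t ((le_max_left _ _).trans ht.le)
  rw [div_lt_iff₀ hc0] at htN
  have k1 := key 1 (by simp) (Set.mem_Ici.2 le_rfl) htS htS
  have k2 := key (-1) (by simp) (Set.mem_Ici.2 le_rfl) htS htS
  simp only at k1 k2
  have hp : 0 < c * G S := mul_pos hc0 (hGpos S)
  have hFt : |F t| < ε * G t := by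
    have e : ε = 2 * c := by linarith
    rw [e, abs_lt]
    constructor <;> linarith [le_abs_self (F S), neg_abs_le (F S)]
  rw [Real.dist_eq, sub_zero]
  rw [← hEG t, abs_mul, abs_of_pos (hGpos t)] at hFt
  exact lt_of_mul_lt_mul_right hFt (hGpos t).le
end

section
/- Let w : ℝ → ℝ be continuous with w(t) ≤ −c for all t ≥ 0 and some constant c > 0, and let λ̃₂ < 0. Then every differentiable solution (e₁, e₂) : [0,∞) → ℝ² of the closed-loop system ė₁ = w(t)·e₁ + λ̃₂·e₂, ė₂ = λ̃₂·e₂ satisfies e₁(t) → 0 and e₂(t) → 0 as t → ∞, for every initial condition (e₁(0), e₂(0)) ∈ ℝ². -/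
open Filter

/-- Global asymptotic tracking for the example: if `w t ≤ -c < 0` for all `t ≥ 0` and
`λ̃₂ < 0`, then every solution of the closed loop `ė₁ = w t · e₁ + λ̃₂ e₂`, `ė₂ = λ̃₂ e₂`
tends to the origin as `t → ∞`, for every initial condition. -/
theorem example_global_asymptotic_tracking (w : ℝ → ℝ) (hw : Continuous w)
    (c : ℝ) (hc : 0 < c) (hwneg : ∀ t : ℝ, 0 ≤ t → w t ≤ -c)
    (lam2 : ℝ) (hlam2 : lam2 < 0) :
    ∀ e₁ e₂ : ℝ → ℝ,
      (∀ t : ℝ, 0 ≤ t →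
        HasDerivAt e₁ (w t * e₁ t + lam2 * e₂ t) t ∧ HasDerivAt e₂ (lam2 * e₂ t) t) →
      Tendsto e₁ atTop (nhds 0) ∧ Tendsto e₂ atTop (nhds 0) := by
  intro e₁ e₂ h
  obtain ⟨m, hm, hmc, hma⟩ : ∃ m : ℝ, 0 < m ∧ m ≤ c ∧ m ≤ -lam2 :=
    ⟨min c (-lam2), lt_min hc (by linarith), min_le_left _ _, min_le_right _ _⟩
  obtain ⟨K, hK, hKc⟩ : ∃ K : ℝ, 0 < K ∧ K * c = -lam2 :=
    ⟨-lam2 / c, div_pos (by linarith) hc, by field_simp⟩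
  -- Lyapunov function with exponential weight
  have hd : ∀ t : ℝ, 0 ≤ t → HasDerivAt
      (fun t => Real.exp (m * t) * (e₁ t ^ 2 + K * e₂ t ^ 2))
      (Real.exp (m * t) * (m * (e₁ t ^ 2 + K * e₂ t ^ 2) +
        (2 * e₁ t * (w t * e₁ t + lam2 * e₂ t) + K * (2 * e₂ t * (lam2 * e₂ t))))) t := by
    intro t ht
    obtain ⟨h1, h2⟩ := h t ht
    have h3 : HasDerivAt (fun t => Real.exp (m * t)) (Real.exp (m * t) * (m * 1)) t :=
      ((hasDerivAt_id t).const_mul m).exp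
    refine (h3.mul ((h1.pow 2).add ((h2.pow 2).const_mul K))).congr_deriv ?_
    simp only [Pi.add_apply, Pi.pow_apply]
    push_cast
    ring
  have hanti : AntitoneOn (fun t => Real.exp (m * t) * (e₁ t ^ 2 + K * e₂ t ^ 2))
      (Set.Ici 0) := by
    apply antitoneOn_of_deriv_nonpos (convex_Ici 0)
    · intro t ht
      exact (hd t ht).continuousAt.continuousWithinAt
    · intro t ht
      exact (hd t (interior_subset ht)).differentiableAt.differentiableWithinAt
    · intro t ht
      have ht0 : 0 ≤ t := interior_subset ht
      rw [(hd t ht0).deriv]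
      apply mul_nonpos_of_nonneg_of_nonpos (Real.exp_pos _).le
      have hl : lam2 = -(K * c) := by linarith
      have hw1 := mul_le_mul_of_nonneg_right (hwneg t ht0) (sq_nonneg (e₁ t))
      have hm1 := mul_le_mul_of_nonneg_right hmc (sq_nonneg (e₁ t))
      have hm2 := mul_le_mul_of_nonneg_right hma (mul_nonneg hK.le (sq_nonneg (e₂ t)))
      have hs := mul_nonneg hc.le (sq_nonneg (e₁ t + K * e₂ t))
      rw [hl] at hm2 ⊢
      nlinarith
  have hV : Tendsto (fun t => e₁ t ^ 2 + K * e₂ t ^ 2) atTop (nhds 0) := by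
    have hexp : Tendsto (fun t : ℝ => Real.exp (-(m * t)) * (e₁ 0 ^ 2 + K * e₂ 0 ^ 2))
        atTop (nhds 0) := by
      have := (Real.tendsto_exp_neg_atTop_nhds_zero.comp
        (tendsto_id.const_mul_atTop hm)).mul_const (e₁ 0 ^ 2 + K * e₂ 0 ^ 2)
      simpa [Function.comp_def] using this
    refine squeeze_zero' (Eventually.of_forall fun t => by positivity) ?_ hexp
    filter_upwards [eventually_ge_atTop (0 : ℝ)] with t ht
    have h0 := hanti (Set.mem_Ici.2 le_rfl) (Set.mem_Ici.2 ht) ht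
    simp only [mul_zero, Real.exp_zero, one_mul] at h0
    have h1 := mul_le_mul_of_nonneg_left h0 (Real.exp_pos (-(m * t))).le
    rwa [← mul_assoc, ← Real.exp_add, neg_add_cancel, Real.exp_zero, one_mul] at h1
  have hsq : ∀ f : ℝ → ℝ, Tendsto (fun t => f t ^ 2) atTop (nhds 0) →
      Tendsto f atTop (nhds 0) := by
    intro f hf
    have := hf.sqrt
    simp only [Real.sqrt_sq_eq_abs, Real.sqrt_zero] at this
    exact (tendsto_zero_iff_abs_tendsto_zero f).2 this
  constructor
  · apply hsq
    refine squeeze_zero (fun t => sq_nonneg _) (fun t => ?_) hV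
    have : 0 ≤ K * e₂ t ^ 2 := by positivity
    linarith
  · apply hsq
    have hV' := hV.const_mul K⁻¹
    rw [mul_zero] at hV'
    refine squeeze_zero (fun t => sq_nonneg _) (fun t => ?_) hV'
    have : 0 ≤ K⁻¹ * e₁ t ^ 2 := by positivity
    rw [mul_add, inv_mul_cancel_left₀ hK.ne']
    linarith
end

section
/- Let λ̃₁, λ̃₂ < 0. The origin is stable in the sense of Lyapunov for the closed-loop chained system ẋ₁ = λ̃₁·x₁, ẋ₂ = λ̃₂·x₂, ẋ₃ = λ̃₁·x₁·x₂: for every ε > 0 there exists δ > 0 such that every differentiable solution x : [0,∞) → ℝ³ of this system with |x(0)| < δ satisfies |x(t)| ≤ ε for all t ≥ 0. -/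
theorem aux_le (f f' : ℝ → ℝ) (h : ∀ t, 0 ≤ t → HasDerivAt f (f' t) t)
    (hn : ∀ t, 0 ≤ t → f' t ≤ 0) (t : ℝ) (ht : 0 ≤ t) : f t ≤ f 0 := by
  have : AntitoneOn f (Set.Ici 0) := by
    apply antitoneOn_of_deriv_nonpos (convex_Ici 0)
    · intro s hs
      exact (h s hs).continuousAt.continuousWithinAt
    · intro s hs
      rw [interior_Ici] at hs
      exact (h s (le_of_lt hs)).differentiableAt.differentiableWithinAt
    · intro s hs
      rw [interior_Ici] at hs
      rw [(h s (le_of_lt hs)).deriv]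
      exact hn s (le_of_lt hs)
  exact this (Set.mem_Ici.2 le_rfl) (Set.mem_Ici.2 ht) ht

/-- Lyapunov stability of the origin for the closed-loop chained system
`ẋ₁ = λ̃₁ x₁, ẋ₂ = λ̃₂ x₂, ẋ₃ = λ̃₁ x₁ x₂` (with `λ̃₁, λ̃₂ < 0`): for every `ε > 0` there is
`δ > 0` such that every solution with Euclidean norm of the initial state `< δ` stays within
Euclidean norm `ε` for all `t ≥ 0`. -/
theorem chained_system_lyapunov_stable (lam1 lam2 : ℝ) (h1 : lam1 < 0) (h2 : lam2 < 0) :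
    ∀ ε : ℝ, 0 < ε → ∃ δ : ℝ, 0 < δ ∧
      ∀ x1 x2 x3 : ℝ → ℝ,
        (∀ t : ℝ, 0 ≤ t →
          HasDerivAt x1 (lam1 * x1 t) t ∧
          HasDerivAt x2 (lam2 * x2 t) t ∧
          HasDerivAt x3 (lam1 * x1 t * x2 t) t) →
        Real.sqrt (x1 0 ^ 2 + x2 0 ^ 2 + x3 0 ^ 2) < δ →
        ∀ t : ℝ, 0 ≤ t → Real.sqrt (x1 t ^ 2 + x2 t ^ 2 + x3 t ^ 2) ≤ ε := by
  intro ε hε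
  refine ⟨min 1 (ε / 4), by positivity, ?_⟩
  intro x1 x2 x3 h h0 t ht
  set d := min 1 (ε / 4) with hd
  have hd0 : 0 < d := by positivity
  have hd1 : d ≤ 1 := min_le_left _ _
  have hd2 : d ≤ ε / 4 := min_le_right _ _
  rw [Real.sqrt_lt' hd0] at h0
  obtain ⟨c, hc⟩ : ∃ c, c = lam1 / (lam1 + lam2) := ⟨_, rfl⟩
  have hs : lam1 + lam2 < 0 := by linarith
  have hcm : c * (lam1 + lam2) = lam1 := by
    rw [hc]; exact div_mul_cancel₀ _ hs.ne
  have hc0 : 0 ≤ c := by rw [hc]; exact div_nonneg_of_nonpos h1.le hs.le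
  have hc1 : c ≤ 1 := by rw [hc, div_le_one_of_neg hs]; linarith
  have e1 : x1 t ^ 2 ≤ x1 0 ^ 2 := by
    refine aux_le (fun s => x1 s ^ 2) (fun s => 2 * lam1 * x1 s ^ 2) ?_ ?_ t ht
    · intro s hs
      refine ((h s hs).1.pow 2).congr_deriv ?_
      push_cast; ring
    · intro s _
      nlinarith [sq_nonneg (x1 s)]
  have e2 : x2 t ^ 2 ≤ x2 0 ^ 2 := by
    refine aux_le (fun s => x2 s ^ 2) (fun s => 2 * lam2 * x2 s ^ 2) ?_ ?_ t ht
    · intro s hs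
      refine ((h s hs).2.1.pow 2).congr_deriv ?_
      push_cast; ring
    · intro s _
      nlinarith [sq_nonneg (x2 s)]
  have hI : ∀ s, 0 ≤ s → HasDerivAt (fun s => x3 s - c * (x1 s * x2 s)) 0 s := by
    intro s hs
    obtain ⟨a1, a2, a3⟩ := h s hs
    refine (a3.sub ((a1.mul a2).const_mul c)).congr_deriv ?_
    linear_combination -(x1 s * x2 s) * hcm
  have e3 : x3 t - c * (x1 t * x2 t) ≤ x3 0 - c * (x1 0 * x2 0) :=
    aux_le _ (fun _ => 0) hI (fun _ _ => le_rfl) t ht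
  have e4 : -(x3 t - c * (x1 t * x2 t)) ≤ -(x3 0 - c * (x1 0 * x2 0)) :=
    aux_le (fun s => -(x3 s - c * (x1 s * x2 s))) (fun _ => 0)
      (fun s hs => (hI s hs).neg.congr_deriv neg_zero) (fun _ _ => le_rfl) t ht
  have key : ∀ a b : ℝ, a ^ 2 + b ^ 2 ≤ d ^ 2 → |c * (a * b)| ≤ d ^ 2 / 2 := by
    intro a b hab
    have hh : |a * b| ≤ d ^ 2 / 2 := by
      rw [abs_le]; constructor <;> nlinarith [sq_nonneg (a + b), sq_nonneg (a - b)]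
    rw [abs_mul, abs_of_nonneg hc0]
    nlinarith [abs_nonneg (a * b)]
  have k0 := abs_le.1 (key (x1 0) (x2 0) (by nlinarith [sq_nonneg (x3 0)]))
  have k1 := abs_le.1 (key (x1 t) (x2 t) (by nlinarith [sq_nonneg (x3 0)]))
  have k3 := abs_le.1 (abs_le_of_sq_le_sq (a := x3 0) (b := d)
    (by nlinarith [sq_nonneg (x1 0), sq_nonneg (x2 0)]) hd0.le)
  have hdd : d ^ 2 ≤ d := by nlinarith
  have e5 : x3 t ^ 2 ≤ (2 * d) ^ 2 := by
    apply sq_le_sq'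
    · linarith [k0.1, k0.2, k1.1, k1.2, k3.1, k3.2]
    · linarith [k0.1, k0.2, k1.1, k1.2, k3.1, k3.2]
  apply Real.sqrt_le_iff.2
  refine ⟨hε.le, ?_⟩
  nlinarith [sq_nonneg (x3 0)]
end
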